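/- For every n ≥ 2, any subset D of the 2-dimensional isotropic subspaces of (ZMod 2)^{2n} that admits a pairwise consistent family of outcomes (f_x)_{x∈D} satisfies |D| ≤ (4/5)·|L^n_2|. That is, Pval(↓L^n_2) ≤ 4/5. -/

import Mathlib

open Finset

abbrev F2 := ZMod 2
/-- `F2^{2n}`, split into the first and last `n` coordinates. -/
abbrev PV (n : ℕ) := (Fin n → F2) × (Fin n → F2)

/-- Symplectic product on `F2^{2n}`: zero iff `a₁·b₂ = a₂·b₁`. -/
def symp {n : ℕ} (a b : PV n) : F2 :=
  (∑ i, a.1 i * b.2 i) + (∑ i, a.2 i * b.1 i)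

/-- A subspace is isotropic if the symplectic product vanishes on it. -/
def IsIsotropic {n : ℕ} (S : Submodule F2 (PV n)) : Prop :=
  ∀ x ∈ S, ∀ y ∈ S, symp x y = 0

/-- `Lset n k` = `L^n_k`, the set of `k`-dimensional isotropic subspaces of `F2^{2n}`. -/
def Lset (n k : ℕ) : Set (Submodule F2 (PV n)) :=
  {S | IsIsotropic S ∧ Module.finrank F2 S = k}

/-- Integer lift of a vector over `F2`, with values in `{0,1} ⊆ ℤ`. -/
def liftZ {n : ℕ} (v : Fin n → F2) : Fin n → ℤ := fun i => ((v i).val : ℤ)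

def dotZ {n : ℕ} (a b : Fin n → ℤ) : ℤ := ∑ i, a i * b i

/-- The phase `i^{x̂₁·x̂₂} · i^{ŷ₁·ŷ₂} · i^{−((x+y)^^₁·(x+y)^^₂)} · (−1)^{x̂₂·ŷ₁}`. -/
noncomputable def phase {n : ℕ} (x y : PV n) : ℂ :=
  Complex.I ^ (dotZ (liftZ x.1) (liftZ x.2)) *
  Complex.I ^ (dotZ (liftZ y.1) (liftZ y.2)) *
  Complex.I ^ (-(dotZ (liftZ (x + y).1) (liftZ (x + y).2))) *
  (-1 : ℂ) ^ (dotZ (liftZ x.2) (liftZ y.1))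

/-- `w(x,y) ∈ {0,1} ⊆ F2`: zero iff the phase equals `1`. -/
noncomputable def wght {n : ℕ} (x y : PV n) : F2 :=
  if phase x y = 1 then 0 else 1

/-- An outcome of an isotropic subspace `S` is `f : S → F2` with
`f(x+y) = f(x)+f(y)+w(x,y)`. -/
def IsOutcome {n : ℕ} (S : Submodule F2 (PV n)) (f : S → F2) : Prop :=
  ∀ x y : S, f (x + y) = f x + f y + wght (x : PV n) (y : PV n)

/-- Two outcomes are consistent if they agree on the intersection of their domains. -/
def ConsistentOn {n : ℕ} {S₁ S₂ : Submodule F2 (PV n)} (f₁ : S₁ → F2) (f₂ : S₂ → F2) : Prop :=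
  ∀ v (h1 : v ∈ S₁) (h2 : v ∈ S₂), f₁ ⟨v, h1⟩ = f₂ ⟨v, h2⟩

/-!
If `s` restricts to an outcome of the six rows and columns of a Mermin square, summing `s` over the
nine points by rows and by columns gives values that differ by `1`. Hence `D` misses one of the six
planes of each Mermin square.

The squares are indexed by the symplectic frames `((e₁, e₂), (f₁, f₂))`, and each of the six planes
of the square of a frame is the span of the first pair of another frame, through a permutation of
the set of frames. Every isotropic plane is the first plane of equally many frames, so counting
over all frames shows that `D` contains at most `5/6` of the isotropic planes. In dimension 4 there
are 15 of them, so `D` has at most `12.5`, hence at most `12 = 4/5 * 15`. Averaging this bound over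
the isometric embeddings of the 4-dimensional space gives `4/5` for all `n`.
-/

open LinearMap (BilinForm)

section NondegenerateForm

variable {K V ι : Type*} [Field K] [AddCommGroup V] [Module K V] {B : BilinForm K V}

theorem exists_bilin_apply_eq [FiniteDimensional K V] (hB : B.Nondegenerate) {v : ι → V}
    (hv : LinearIndependent K v) (t : ι → K) : ∃ y, ∀ i, B (v i) y = t i := by
  obtain ⟨g, hg⟩ := (Finsupp.linearCombination K t ∘ₗ hv.repr).exists_extend
  obtain ⟨y, rfl⟩ := (B.flip.toDual hB.flip).surjective g
  refine ⟨y, fun i => ?_⟩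
  have hvi : v i ∈ Submodule.span K (Set.range v) := Submodule.subset_span ⟨i, rfl⟩
  calc B (v i) y = Finsupp.linearCombination K t (hv.repr ⟨v i, hvi⟩) :=
        DFunLike.congr_fun hg ⟨v i, hvi⟩
    _ = t i := by
        rw [hv.repr_eq_single i ⟨v i, hvi⟩ rfl, Finsupp.linearCombination_single, one_smul]

theorem card_bilin_apply_eq [Fintype K] [DecidableEq K] [Fintype V] [Fintype ι]
    (hB : B.Nondegenerate) {v : ι → V} (hv : LinearIndependent K v) (t : ι → K) :
    Fintype.card K ^ Fintype.card ι * #{y | ∀ i, B (v i) y = t i} = Fintype.card V := by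
  classical
  let φ : V →ₗ[K] ι → K := LinearMap.pi fun i => B (v i)
  have hφ (u : ι → K) : u ∈ Set.range φ := (exists_bilin_apply_eq hB hv u).imp fun _ => funext
  have hfiber (u : ι → K) : #{y | φ y = u} = #{y | ∀ i, B (v i) y = t i} := by
    rw [AddMonoidHom.card_fiber_eq_of_mem_range φ (hφ u) (hφ t)]
    simp only [funext_iff, φ, LinearMap.pi_apply]
  calc _ = ∑ u : ι → K, #{y | φ y = u} := by simp [hfiber]
    _ = Fintype.card V := (Finset.card_eq_sum_card_fiberwise (by simp [Set.MapsTo])).symm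

end NondegenerateForm

section BinarySpace

variable {V : Type*} [AddCommGroup V] [Module F2 V]

theorem linearIndependent_pair_F2 {x y : V} :
    LinearIndependent F2 ![x, y] ↔ x ≠ 0 ∧ y ≠ 0 ∧ x ≠ y := by
  refine ⟨fun h => ⟨h.ne_zero 0, h.ne_zero 1, h.injective.ne zero_ne_one⟩, fun ⟨hx, hy, hxy⟩ => ?_⟩
  rw [LinearIndependent.pair_iff' hx]
  intro a
  obtain rfl | rfl : a = 0 ∨ a = 1 := by decide +revert
  · rwa [zero_smul, ne_comm]
  · rwa [one_smul]

theorem finrank_span_pair {K W : Type*} [Field K] [AddCommGroup W] [Module K W] {x y : W}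
    (h : LinearIndependent K ![x, y]) : Module.finrank K (Submodule.span K {x, y}) = 2 := by
  have hrange : Set.range ![x, y] = {x, y} := by
    simp [Matrix.range_cons, Matrix.range_empty, Set.pair_comm]
  rw [← hrange, finrank_span_eq_card h, Fintype.card_fin]

variable {B : BilinForm F2 V}

theorem bilin_comm_of_isAlt (hB : B.IsAlt) (x y : V) : B x y = B y x := by
  rw [← hB.neg_eq, CharTwo.neg_eq]

/-- `t = ((e₁, e₂), (f₁, f₂))` is a symplectic basis of a 4-dimensional nondegenerate subspace,
consisting of two orthogonal hyperbolic pairs `(e₁, f₁)` and `(e₂, f₂)`. The nesting makes `t.1` an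
ordered basis of an isotropic plane. -/
structure IsSymplecticFrame (B : BilinForm F2 V) (t : (V × V) × (V × V)) : Prop where
  e₁_e₂ : B t.1.1 t.1.2 = 0
  e₁_f₁ : B t.1.1 t.2.1 = 1
  e₁_f₂ : B t.1.1 t.2.2 = 0
  e₂_f₁ : B t.1.2 t.2.1 = 0
  e₂_f₂ : B t.1.2 t.2.2 = 1
  f₁_f₂ : B t.2.1 t.2.2 = 0

/-- The vectors of a frame `((e₁, e₂), (f₁, f₂))` in the order `e₁, e₂, f₁, f₂`. -/
def frameVec {V : Type*} (t : (V × V) × (V × V)) : Fin 4 → V := ![t.1.1, t.1.2, t.2.1, t.2.2]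

theorem frameVec_injective {V : Type*} : Function.Injective (frameVec (V := V)) := by
  rintro ⟨⟨e₁, e₂⟩, f₁, f₂⟩ ⟨⟨e₁', e₂'⟩, f₁', f₂'⟩ h
  simpa [frameVec, and_assoc] using h

variable {t : (V × V) × (V × V)}

theorem IsSymplecticFrame.bilin_frameVec (hB : B.IsAlt) (ht : IsSymplecticFrame B t)
    (i j : Fin 4) : B (frameVec t i) (frameVec t j) = if j = i + 2 then 1 else 0 := by
  obtain ⟨⟨e₁, e₂⟩, f₁, f₂⟩ := t
  obtain ⟨e₁e₂, e₁f₁, e₁f₂, e₂f₁, e₂f₂, f₁f₂⟩ := ht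
  have hcomm := bilin_comm_of_isAlt hB
  have hself := hB.self_eq_zero
  fin_cases i <;> fin_cases j <;> simp_all [frameVec]

theorem IsSymplecticFrame.linearIndependent (hB : B.IsAlt) (ht : IsSymplecticFrame B t) :
    LinearIndependent F2 (frameVec t) := by
  rw [Fintype.linearIndependent_iff]
  intro g hg i
  have hi : i + 2 + 2 = i := by decide +revert
  simpa [ht.bilin_frameVec hB, hi] using congrArg (B (frameVec t (i + 2))) hg

theorem IsSymplecticFrame.linearIndependent_pair (hB : B.IsAlt)
    (ht : IsSymplecticFrame B t) : LinearIndependent F2 ![t.1.1, t.1.2] := by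
  convert (ht.linearIndependent hB).comp ![0, 1] (by decide) using 1
  ext i
  fin_cases i <;> rfl

theorem linearIndependent_cons_of_bilin_ne_zero (hB : B.IsAlt) {x y z : V}
    (hli : LinearIndependent F2 ![x, y]) (hxy : B x y = 0) (hxz : B x z ≠ 0) :
    LinearIndependent F2 ![z, x, y] := by
  have hspan : Submodule.span F2 (Set.range ![x, y]) ≤ LinearMap.ker (B x) := by
    rw [Submodule.span_le, Set.range_subset_iff]
    simp [Fin.forall_fin_two, hxy, hB.self_eq_zero]
  exact linearIndependent_finCons.mpr ⟨hli, fun hz => hxz (hspan hz)⟩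

variable (B) in
/-- The 2-dimensional totally isotropic subspaces of `V`, the lines of its symplectic polar
space. -/
def isotropicPlanes : Set (Submodule F2 V) :=
  {S | (∀ x ∈ S, ∀ y ∈ S, B x y = 0) ∧ Module.finrank F2 S = 2}

theorem span_pair_mem_isotropicPlanes (hB : B.IsAlt) {x y : V}
    (hli : LinearIndependent F2 ![x, y]) (hxy : B x y = 0) :
    Submodule.span F2 {x, y} ∈ isotropicPlanes B := by
  refine ⟨fun u hu v hv => ?_, finrank_span_pair hli⟩
  obtain ⟨a, b, rfl⟩ := Submodule.mem_span_pair.mp hu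
  obtain ⟨c, d, rfl⟩ := Submodule.mem_span_pair.mp hv
  simp [hB.self_eq_zero, hxy, bilin_comm_of_isAlt hB y x]

/-- The isotropic plane spanned by `e₁` and `e₂`, for a frame `((e₁, e₂), (f₁, f₂))`. -/
def framePlane (t : (V × V) × (V × V)) : Submodule F2 V := Submodule.span F2 {t.1.1, t.1.2}

theorem framePlane_mem_isotropicPlanes (hB : B.IsAlt) (ht : IsSymplecticFrame B t) :
    framePlane t ∈ isotropicPlanes B :=
  span_pair_mem_isotropicPlanes hB (ht.linearIndependent_pair hB) ht.e₁_e₂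

end BinarySpace

section Counting

variable {V : Type*} [AddCommGroup V] [Module F2 V] [Fintype V]

open Classical in
/-- Ordered bases of isotropic planes. -/
noncomputable def isotropicPairs (B : BilinForm F2 V) : Finset (V × V) :=
  {p | LinearIndependent F2 ![p.1, p.2] ∧ B p.1 p.2 = 0}

open Classical in
/-- The set of symplectic frames of `V`. -/
noncomputable def symplecticFrames (B : BilinForm F2 V) : Finset ((V × V) × (V × V)) :=
  {t | IsSymplecticFrame B t}

variable {B : BilinForm F2 V}

theorem mem_isotropicPairs {p : V × V} :
    p ∈ isotropicPairs B ↔ LinearIndependent F2 ![p.1, p.2] ∧ B p.1 p.2 = 0 := by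
  simp [isotropicPairs]

theorem mem_symplecticFrames {t : (V × V) × (V × V)} :
    t ∈ symplecticFrames B ↔ IsSymplecticFrame B t := by
  simp [symplecticFrames]

theorem fst_mem_isotropicPairs (hB : B.IsAlt) {t : (V × V) × (V × V)}
    (ht : t ∈ symplecticFrames B) : t.1 ∈ isotropicPairs B :=
  have h := mem_symplecticFrames.mp ht
  mem_isotropicPairs.mpr ⟨h.linearIndependent_pair hB, h.e₁_e₂⟩

open Classical in
theorem card_orderedBases_eq_six {S : Submodule F2 V} (hS : S ∈ isotropicPlanes B) :
    #{p ∈ isotropicPairs B | Submodule.span F2 {p.1, p.2} = S} = 6 := by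
  have hbases : {p ∈ isotropicPairs B | Submodule.span F2 {p.1, p.2} = S} =
      (({x | x ∈ S} : Finset V).erase 0).offDiag := by
    ext ⟨x, y⟩
    simp only [mem_filter, mem_isotropicPairs, linearIndependent_pair_F2, mem_offDiag, mem_erase,
      mem_univ, true_and]
    constructor
    · rintro ⟨⟨⟨hx, hy, hxy⟩, -⟩, rfl⟩
      exact ⟨⟨hx, Submodule.subset_span (by simp)⟩, ⟨hy, Submodule.subset_span (by simp)⟩, hxy⟩
    · rintro ⟨⟨hx, hxS⟩, ⟨hy, hyS⟩, hxy⟩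
      refine ⟨⟨⟨hx, hy, hxy⟩, hS.1 x hxS y hyS⟩, Submodule.eq_of_le_of_finrank_eq ?_ ?_⟩
      · exact Submodule.span_le.mpr (Set.pair_subset hxS hyS)
      · rw [hS.2, finrank_span_pair (linearIndependent_pair_F2.mpr ⟨hx, hy, hxy⟩)]
  have hcard : #{x | x ∈ S} = 4 := by
    rw [← Fintype.card_subtype, Module.card_eq_pow_finrank (K := F2), hS.2, ZMod.card]
    rfl
  rw [hbases, offDiag_card, card_erase_of_mem (by simp), hcard]

open Classical in
theorem card_isotropicPairs_span_mem {D : Set (Submodule F2 V)} (hD : D ⊆ isotropicPlanes B) :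
    #{p ∈ isotropicPairs B | Submodule.span F2 {p.1, p.2} ∈ D} = 6 * D.ncard := by
  rw [card_eq_sum_card_fiberwise (f := fun p => Submodule.span F2 {p.1, p.2}) (t := D.toFinset)
    (fun p hp => by simpa using (mem_filter.mp hp).2)]
  have hfiber : ∀ S ∈ D.toFinset, #{p ∈ {p ∈ isotropicPairs B | Submodule.span F2 {p.1, p.2} ∈ D} |
      Submodule.span F2 {p.1, p.2} = S} = 6 := by
    intro S hS
    rw [Set.mem_toFinset] at hS
    rw [← card_orderedBases_eq_six (hD hS), filter_filter]
    congr 1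
    refine filter_congr fun p _ => and_iff_right_of_imp ?_
    rintro rfl
    exact hS
  rw [sum_congr rfl hfiber, sum_const, smul_eq_mul, mul_comm, Set.ncard_eq_toFinset_card']

theorem card_bilin_eq_zero (hB : B.Nondegenerate) {x : V} (hx : x ≠ 0) :
    2 * #{y | B x y = 0} = Fintype.card V := by
  have hv : LinearIndependent F2 ![x] := linearIndependent_unique_iff.mpr hx
  simpa using card_bilin_apply_eq hB hv 0

theorem two_mul_card_isotropicPairs (hB : B.IsAlt) (hB' : B.Nondegenerate) :
    2 * #(isotropicPairs B) = (Fintype.card V - 1) * (Fintype.card V - 4) := by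
  classical
  let N : Finset V := univ.erase 0
  let M (x : V) : Finset V := (({y | B x y = 0} : Finset V).erase 0).erase x
  have hpairs : #(isotropicPairs B) = #(N.sigma M) := by
    refine card_nbij' (fun p => ⟨p.1, p.2⟩) (fun p => (p.1, p.2)) ?_ ?_ ?_ ?_
    · intro p hp
      obtain ⟨⟨hx, hy, hxy⟩, h⟩ := by
        simpa [mem_isotropicPairs, linearIndependent_pair_F2] using hp
      simp [N, M, hx, hy, Ne.symm hxy, h]
    · rintro ⟨x, y⟩ hp
      obtain ⟨hx, hyx, hy, h⟩ : x ≠ 0 ∧ y ≠ x ∧ y ≠ 0 ∧ B x y = 0 := by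
        simpa [N, M, and_assoc, and_comm] using hp
      simp [mem_isotropicPairs, linearIndependent_pair_F2, hx, hy, hyx.symm, h]
    · exact fun _ _ => rfl
    · exact fun _ _ => rfl
  have hM : ∀ x ∈ N, 2 * #(M x) = Fintype.card V - 4 := by
    intro x hx
    have hx : x ≠ 0 := ne_of_mem_erase hx
    have hcard : #(M x) = #{y | B x y = 0} - 1 - 1 := by
      rw [card_erase_of_mem (by simp [hx, hB.self_eq_zero]), card_erase_of_mem (by simp)]
    have := card_bilin_eq_zero hB' hx
    omega
  rw [hpairs, card_sigma, mul_sum, sum_congr rfl hM, sum_const, smul_eq_mul,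
    card_erase_of_mem (mem_univ _), card_univ]

open Classical in
theorem card_frames_over_pair (hB : B.IsAlt) (hB' : B.Nondegenerate) {p : V × V}
    (hp : p ∈ isotropicPairs B) :
    32 * #{t ∈ symplecticFrames B | t.1 = p} = Fintype.card V ^ 2 := by
  obtain ⟨e₁, e₂⟩ := p
  obtain ⟨hli, he⟩ : LinearIndependent F2 ![e₁, e₂] ∧ B e₁ e₂ = 0 := mem_isotropicPairs.mp hp
  let F₁ : Finset V := {f | ∀ i, B (![e₁, e₂] i) f = ![1, 0] i}
  let F₂ (f₁ : V) : Finset V := {f | ∀ i, B (![f₁, e₁, e₂] i) f = ![0, 0, 1] i}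
  have hframes : #{t ∈ symplecticFrames B | t.1 = (e₁, e₂)} = #(F₁.sigma F₂) := by
    refine card_nbij' (fun t => ⟨t.2.1, t.2.2⟩) (fun f => ((e₁, e₂), (f.1, f.2))) ?_ ?_ ?_ ?_
    · rintro ⟨_, f₁, f₂⟩ h
      obtain ⟨h, rfl⟩ : IsSymplecticFrame B (_, (f₁, f₂)) ∧ _ = (e₁, e₂) := by
        simpa [mem_symplecticFrames] using h
      simp [F₁, F₂, Fin.forall_fin_succ, h.e₁_f₁, h.e₁_f₂, h.e₂_f₁, h.e₂_f₂, h.f₁_f₂]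
    · rintro ⟨f₁, f₂⟩ h
      obtain ⟨⟨e₁f₁, e₂f₁⟩, f₁f₂, e₁f₂, e₂f₂⟩ :
          (B e₁ f₁ = 1 ∧ B e₂ f₁ = 0) ∧ B f₁ f₂ = 0 ∧ B e₁ f₂ = 0 ∧ B e₂ f₂ = 1 := by
        simpa [F₁, F₂, Fin.forall_fin_succ] using h
      simpa [mem_symplecticFrames] using
        (⟨he, e₁f₁, e₁f₂, e₂f₁, e₂f₂, f₁f₂⟩ : IsSymplecticFrame B ((e₁, e₂), (f₁, f₂)))
    · intro t h
      exact Prod.ext (mem_filter.mp h).2.symm rfl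
    · rintro ⟨f₁, f₂⟩ -
      rfl
  have hF₁ : 4 * #F₁ = Fintype.card V := by
    simpa [F₁] using card_bilin_apply_eq hB' hli ![1, 0]
  have hF₂ : ∀ f₁ ∈ F₁, 8 * #(F₂ f₁) = Fintype.card V := by
    intro f₁ hf₁
    have e₁f₁ : B e₁ f₁ = 1 := by simpa using (mem_filter.mp hf₁).2 0
    simpa [F₂] using card_bilin_apply_eq hB'
      (linearIndependent_cons_of_bilin_ne_zero hB hli he (e₁f₁.trans_ne one_ne_zero)) ![0, 0, 1]
  calc 32 * #{t ∈ symplecticFrames B | t.1 = (e₁, e₂)} = 4 * ∑ f₁ ∈ F₁, 8 * #(F₂ f₁) := by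
        rw [hframes, card_sigma, mul_sum, mul_sum]
        exact sum_congr rfl fun _ _ => by ring
    _ = 4 * #F₁ * Fintype.card V := by
        rw [sum_congr rfl hF₂, sum_const, smul_eq_mul, mul_assoc]
    _ = Fintype.card V ^ 2 := by rw [hF₁, sq]

open Classical in
theorem card_symplecticFrames_filter_fst (hB : B.IsAlt) (hB' : B.Nondegenerate)
    (P : V × V → Prop) :
    32 * #{t ∈ symplecticFrames B | P t.1} =
      Fintype.card V ^ 2 * #{p ∈ isotropicPairs B | P p} := by
  rw [card_eq_sum_card_fiberwise (f := Prod.fst) (t := {p ∈ isotropicPairs B | P p}), mul_sum]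
  · rw [sum_const_nat (m := Fintype.card V ^ 2), mul_comm]
    intro p hp
    obtain ⟨hp, hPp⟩ := mem_filter.mp hp
    rw [← card_frames_over_pair hB hB' hp, filter_filter]
    congr 2
    refine filter_congr fun t _ => and_iff_right_of_imp ?_
    rintro rfl
    exact hPp
  · intro t ht
    obtain ⟨ht, hPt⟩ := mem_filter.mp ht
    exact mem_filter.mpr ⟨fst_mem_isotropicPairs hB ht, hPt⟩

open Classical in
theorem card_symplecticFrames_span_mem (hB : B.IsAlt) (hB' : B.Nondegenerate)
    {D : Set (Submodule F2 V)} (hD : D ⊆ isotropicPlanes B) :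
    16 * #{t ∈ symplecticFrames B | framePlane t ∈ D} =
      3 * Fintype.card V ^ 2 * D.ncard := by
  have h : 32 * #{t ∈ symplecticFrames B | framePlane t ∈ D} = Fintype.card V ^ 2 * _ :=
    card_symplecticFrames_filter_fst hB hB' fun p => Submodule.span F2 {p.1, p.2} ∈ D
  rw [card_isotropicPairs_span_mem hD] at h
  linarith

end Counting

section MerminSquare

variable {V : Type*} [AddCommGroup V]

/-- The Mermin square of the frame `((e₁, e₂), (f₁, f₂))` is
```
  e₁       e₂       e₁ + e₂
  f₂       f₁       f₂ + f₁
  e₁ + f₂  e₂ + f₁  e₁ + e₂ + f₂ + f₁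
```
whose rows and columns span isotropic planes. They are encoded by frames: the span of row `i` is
`framePlane (merminSquare i t)` for `i < 3`, that of column `i` is
`framePlane (merminSquare (i + 3) t)`. -/
def merminSquare (i : Fin 6) (t : (V × V) × (V × V)) : (V × V) × (V × V) :=
  let ((e₁, e₂), (f₁, f₂)) := t
  ![((e₁, e₂), (f₁, f₂)), ((f₂, f₁), (e₂, e₁)), ((e₁ + f₂, e₂ + f₁), (f₁, f₂)),
    ((e₁, f₂), (f₁, e₂)), ((e₂, f₁), (f₂, e₁)), ((e₁ + e₂, f₂ + f₁), (f₁, e₂))] i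

theorem merminSquare_injective (i : Fin 6) : Function.Injective (merminSquare (V := V) i) := by
  rintro ⟨⟨e₁, e₂⟩, f₁, f₂⟩ ⟨⟨e₁', e₂'⟩, f₁', f₂'⟩ h
  fin_cases i <;> dsimp [merminSquare] at h <;> grind

variable [Module F2 V]

theorem isSymplecticFrame_merminSquare {B : BilinForm F2 V} (hB : B.IsAlt)
    {t : (V × V) × (V × V)} (ht : IsSymplecticFrame B t) (i : Fin 6) :
    IsSymplecticFrame B (merminSquare i t) := by
  obtain ⟨⟨e₁, e₂⟩, f₁, f₂⟩ := t
  obtain ⟨e₁e₂, e₁f₁, e₁f₂, e₂f₁, e₂f₂, f₁f₂⟩ := ht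
  have hcomm := bilin_comm_of_isAlt hB
  have hself := hB.self_eq_zero
  fin_cases i <;> constructor <;> simp_all [merminSquare, CharTwo.add_self_eq_zero]

end MerminSquare

section DoubleCounting

theorem card_filter_comp_of_injOn {α : Type*} {s : Finset α} {σ : α → α}
    (hσ : Set.MapsTo σ s s) (hinj : Set.InjOn σ s) (P : α → Prop) [DecidablePred P] :
    #{a ∈ s | P (σ a)} = #{a ∈ s | P a} := by
  classical
  have himage : s.image σ = s :=
    eq_of_subset_of_card_le (image_subset_iff.mpr hσ) (card_image_of_injOn hinj).ge
  conv_rhs => rw [← himage, filter_image]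
  exact (card_image_of_injOn (hinj.mono (filter_subset _ _))).symm

variable {V : Type*} [AddCommGroup V] [Module F2 V] {B : BilinForm F2 V} {D : Set (Submodule F2 V)}

/-- No Mermin square of `V` has all of its six rows and columns in `D`. -/
def AvoidsMerminSquares (B : BilinForm F2 V) (D : Set (Submodule F2 V)) : Prop :=
  ∀ t : (V × V) × (V × V), IsSymplecticFrame B t →
    ∃ i, framePlane (merminSquare i t) ∉ D

open Classical in
theorem AvoidsMerminSquares.six_mul_card_le [Fintype V] (hB : B.IsAlt)
    (hD : AvoidsMerminSquares B D) :
    6 * #{t ∈ symplecticFrames B | framePlane t ∈ D} ≤ 5 * #(symplecticFrames B) := by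
  calc _ = ∑ i : Fin 6, #{t ∈ symplecticFrames B | framePlane (merminSquare i t) ∈ D} := by
        rw [sum_congr rfl fun i _ => card_filter_comp_of_injOn
          (fun t ht => mem_symplecticFrames.mpr <|
            isSymplecticFrame_merminSquare hB (mem_symplecticFrames.mp ht) i)
          (merminSquare_injective i).injOn (framePlane · ∈ D)]
        simp
    _ = ∑ t ∈ symplecticFrames B, #{i | framePlane (merminSquare i t) ∈ D} :=
        (sum_card_bipartiteAbove_eq_sum_card_bipartiteBelow _).symm
    _ ≤ 5 * #(symplecticFrames B) := by
        rw [mul_comm, ← smul_eq_mul]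
        refine sum_le_card_nsmul _ _ _ fun t ht => ?_
        obtain ⟨i, hi⟩ := hD t (mem_symplecticFrames.mp ht)
        exact Nat.le_of_lt_succ (card_lt_univ_of_notMem (x := i) (by simpa using hi))

theorem card_symplecticFrames_of_card_eq_sixteen [Fintype V] (hV : Fintype.card V = 16)
    (hB : B.IsAlt) (hB' : B.Nondegenerate) : #(symplecticFrames B) = 720 := by
  classical
  have hframes := card_symplecticFrames_filter_fst hB hB' fun _ => True
  have hpairs := two_mul_card_isotropicPairs hB hB'
  simp only [filter_true, hV] at hframes hpairs
  omega

/- The bound `6/5 * |D| ≤ 15` for the 15 lines of the symplectic quadrangle of order 2 improves to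
`|D| ≤ 12` because `|D|` is an integer. -/
open Classical in
theorem AvoidsMerminSquares.five_mul_card_le_of_card_eq_sixteen [Fintype V]
    (hV : Fintype.card V = 16) (hB : B.IsAlt) (hB' : B.Nondegenerate)
    (hD : AvoidsMerminSquares B D) (hDplanes : D ⊆ isotropicPlanes B) :
    5 * #{t ∈ symplecticFrames B | framePlane t ∈ D} ≤ 4 * #(symplecticFrames B) := by
  have hcount := card_symplecticFrames_span_mem hB hB' hDplanes
  have hsquares := hD.six_mul_card_le hB
  rw [hV] at hcount
  rw [card_symplecticFrames_of_card_eq_sixteen hV hB hB'] at hsquares ⊢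
  omega

end DoubleCounting

section Transport

variable {U V : Type*} [AddCommGroup U] [Module F2 U] [AddCommGroup V] [Module F2 V]
  {A : BilinForm F2 U} {B : BilinForm F2 V} {D : Set (Submodule F2 V)} {s : (U × U) × (U × U)}

/-- The basis of a 4-dimensional space given by a symplectic frame. -/
noncomputable def IsSymplecticFrame.basis [Fintype U] (hU : Fintype.card U = 16) (hA : A.IsAlt)
    (hs : IsSymplecticFrame A s) : Module.Basis (Fin 4) F2 U :=
  basisOfLinearIndependentOfCardEqFinrank (hs.linearIndependent hA) <| by
    have h := Module.card_eq_pow_finrank (K := F2) (V := U)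
    rw [hU, ZMod.card, show 16 = 2 ^ 4 from rfl] at h
    simpa using Nat.pow_right_injective le_rfl h

theorem IsSymplecticFrame.coe_basis [Fintype U] (hU : Fintype.card U = 16) (hA : A.IsAlt)
    (hs : IsSymplecticFrame A s) : ⇑(hs.basis hU hA) = frameVec s :=
  coe_basisOfLinearIndependentOfCardEqFinrank _ _

/-- The image of a frame under a linear map. -/
def mapFrame (φ : U →ₗ[F2] V) (t : (U × U) × (U × U)) : (V × V) × (V × V) :=
  Prod.map (Prod.map φ φ) (Prod.map φ φ) t

theorem framePlane_mapFrame (φ : U →ₗ[F2] V) (t : (U × U) × (U × U)) :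
    framePlane (mapFrame φ t) = (framePlane t).map φ := by
  simp [framePlane, mapFrame, Submodule.map_span, Set.image_pair]

theorem merminSquare_mapFrame (φ : U →ₗ[F2] V) (i : Fin 6) (t : (U × U) × (U × U)) :
    merminSquare i (mapFrame φ t) = mapFrame φ (merminSquare i t) := by
  obtain ⟨⟨e₁, e₂⟩, f₁, f₂⟩ := t
  fin_cases i <;> simp [merminSquare, mapFrame]

theorem IsSymplecticFrame.map {φ : U →ₗ[F2] V} (hφ : ∀ x y, B (φ x) (φ y) = A x y)
    {t : (U × U) × (U × U)} (ht : IsSymplecticFrame A t) :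
    IsSymplecticFrame B (mapFrame φ t) := by
  obtain ⟨e₁e₂, e₁f₁, e₁f₂, e₂f₁, e₂f₂, f₁f₂⟩ := ht
  constructor <;> simpa [mapFrame, hφ]

theorem AvoidsMerminSquares.comap {φ : U →ₗ[F2] V} (hφ : ∀ x y, B (φ x) (φ y) = A x y)
    (hD : AvoidsMerminSquares B D) :
    AvoidsMerminSquares A {S ∈ isotropicPlanes A | S.map φ ∈ D} := by
  intro t ht
  obtain ⟨i, hi⟩ := hD _ (ht.map hφ)
  rw [merminSquare_mapFrame, framePlane_mapFrame] at hi
  exact ⟨i, fun h => hi h.2⟩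

theorem frameVec_mapFrame (φ : U →ₗ[F2] V) (t : (U × U) × (U × U)) (i : Fin 4) :
    frameVec (mapFrame φ t) i = φ (frameVec t i) := by
  fin_cases i <;> rfl

variable [Fintype U]

/-- The linear map carrying the frame `s` of a 4-dimensional space to the frame `t`. -/
noncomputable def IsSymplecticFrame.toMap (hU : Fintype.card U = 16) (hA : A.IsAlt)
    (hs : IsSymplecticFrame A s) (t : (V × V) × (V × V)) : U →ₗ[F2] V :=
  (hs.basis hU hA).constr F2 (frameVec t)

variable (hU : Fintype.card U = 16) (hA : A.IsAlt) (hs : IsSymplecticFrame A s)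

include hU hA hs

theorem IsSymplecticFrame.toMap_frameVec (t : (V × V) × (V × V)) (i : Fin 4) :
    hs.toMap hU hA t (frameVec s i) = frameVec t i := by
  rw [← hs.coe_basis hU hA, IsSymplecticFrame.toMap, Module.Basis.constr_basis]

theorem IsSymplecticFrame.bilin_toMap (hB : B.IsAlt) {t : (V × V) × (V × V)}
    (ht : IsSymplecticFrame B t) (x y : U) :
    B (hs.toMap hU hA t x) (hs.toMap hU hA t y) = A x y := by
  let φ := hs.toMap hU hA t
  have hcomp : B.comp φ φ = A := LinearMap.BilinForm.ext_basis (hs.basis hU hA) fun i j => by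
    simp only [hs.coe_basis, LinearMap.BilinForm.comp_apply, φ, hs.toMap_frameVec,
      ht.bilin_frameVec hB, hs.bilin_frameVec hA]
  exact LinearMap.BilinForm.congr_fun hcomp x y

theorem IsSymplecticFrame.ext_linearMap {φ ψ : U →ₗ[F2] V}
    (h : mapFrame φ s = mapFrame ψ s) : φ = ψ := by
  refine (hs.basis hU hA).ext fun i => ?_
  rw [hs.coe_basis, ← frameVec_mapFrame, h, frameVec_mapFrame]

theorem IsSymplecticFrame.map_toMap (t : (V × V) × (V × V)) :
    mapFrame (hs.toMap hU hA t) s = t :=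
  frameVec_injective <| funext fun i => by rw [frameVec_mapFrame, hs.toMap_frameVec]

theorem IsSymplecticFrame.map_toMap_injective {u : (U × U) × (U × U)}
    (hu : IsSymplecticFrame A u) :
    Function.Injective fun t : (V × V) × (V × V) => mapFrame (hs.toMap hU hA t) u := by
  intro t t' h
  rw [← hs.map_toMap hU hA t, hu.ext_linearMap hU hA h, hs.map_toMap]

omit hs
variable [Fintype V]

/- Averaging the bound in the 4-dimensional space `U` over all isometric embeddings `U → V`: each
frame of `U` is carried to every frame of `V` by exactly one of them. -/
open Classical in
theorem AvoidsMerminSquares.five_mul_card_le (hA' : A.Nondegenerate) (hB : B.IsAlt)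
    (hD : AvoidsMerminSquares B D) :
    5 * #{t ∈ symplecticFrames B | framePlane t ∈ D} ≤ 4 * #(symplecticFrames B) := by
  have hpos : 0 < #(symplecticFrames A) := by
    rw [card_symplecticFrames_of_card_eq_sixteen hU hA hA']
    norm_num
  obtain ⟨s, hs⟩ := card_pos.mp hpos
  let φ := (mem_symplecticFrames.mp hs).toMap (V := V) hU hA
  have hφ : ∀ t ∈ symplecticFrames B, ∀ x y, B (φ t x) (φ t y) = A x y := fun t ht =>
    (mem_symplecticFrames.mp hs).bilin_toMap hU hA hB (mem_symplecticFrames.mp ht)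
  have hfiber : ∀ u ∈ symplecticFrames A, #{t ∈ symplecticFrames B |
      framePlane (mapFrame (φ t) u) ∈ D} = #{t ∈ symplecticFrames B | framePlane t ∈ D} := by
    intro u hu
    rw [mem_symplecticFrames] at hs hu
    refine card_filter_comp_of_injOn (σ := fun t => mapFrame (φ t) u) (fun t ht => ?_)
      (hs.map_toMap_injective hU hA hu).injOn (framePlane · ∈ D)
    exact mem_symplecticFrames.mpr (hu.map (hφ t ht))
  have hlocal : ∀ t ∈ symplecticFrames B, 5 * #{u ∈ symplecticFrames A |
      framePlane (mapFrame (φ t) u) ∈ D} ≤ 4 * #(symplecticFrames A) := by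
    intro t ht
    have h := (hD.comap (hφ t ht)).five_mul_card_le_of_card_eq_sixteen hU hA hA' fun _ h => h.1
    convert h using 4 with u hu
    rw [framePlane_mapFrame, Set.mem_ofPred_eq, and_iff_right]
    exact framePlane_mem_isotropicPlanes hA (mem_symplecticFrames.mp hu)
  refine Nat.le_of_mul_le_mul_left ?_ hpos
  calc #(symplecticFrames A) * (5 * #{t ∈ symplecticFrames B | framePlane t ∈ D})
      = 5 * ∑ u ∈ symplecticFrames A, #{t ∈ symplecticFrames B |
          framePlane (mapFrame (φ t) u) ∈ D} := by
        rw [sum_congr rfl hfiber, sum_const, smul_eq_mul, mul_left_comm]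
    _ = ∑ t ∈ symplecticFrames B, 5 * #{u ∈ symplecticFrames A |
          framePlane (mapFrame (φ t) u) ∈ D} := by
        rw [← mul_sum]
        exact congrArg _ (sum_card_bipartiteAbove_eq_sum_card_bipartiteBelow _)
    _ ≤ #(symplecticFrames B) * (4 * #(symplecticFrames A)) := sum_le_card_nsmul _ _ _ hlocal
    _ = #(symplecticFrames A) * (4 * #(symplecticFrames B)) := by ring

end Transport

section SymplecticForm

/-- The bilinear form `(x, y) ↦ x₂ · y₁` whose polarization is the symplectic product. -/
def halfForm (n : ℕ) : BilinForm F2 (PV n) :=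
  LinearMap.mk₂ F2 (fun x y => x.2 ⬝ᵥ y.1)
    (fun x y z => add_dotProduct x.2 y.2 z.1) (fun c x y => smul_dotProduct c x.2 y.1)
    (fun x y z => dotProduct_add x.2 y.1 z.1) (fun c x y => dotProduct_smul c x.2 y.1)

/-- The symplectic product as a bilinear form. -/
def sympForm (n : ℕ) : BilinForm F2 (PV n) := halfForm n + (halfForm n).flip

variable {n : ℕ}

theorem halfForm_apply (x y : PV n) : halfForm n x y = x.2 ⬝ᵥ y.1 := rfl

theorem sympForm_eq_halfForm_add (x y : PV n) :
    sympForm n x y = halfForm n x y + halfForm n y x := rfl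

theorem sympForm_apply (x y : PV n) : sympForm n x y = symp x y := by
  rw [sympForm_eq_halfForm_add, halfForm_apply, halfForm_apply, add_comm, dotProduct_comm y.2]
  rfl

theorem sympForm_isAlt : (sympForm n).IsAlt := fun x => CharTwo.add_self_eq_zero (halfForm n x x)

theorem sympForm_nondegenerate : (sympForm n).Nondegenerate := by
  refine LinearMap.BilinForm.Nondegenerate.ofSeparatingLeft fun x hx => ?_
  ext i
  · simpa [sympForm_eq_halfForm_add, halfForm_apply] using hx (0, Pi.single i 1)
  · simpa [sympForm_eq_halfForm_add, halfForm_apply] using hx (Pi.single i 1, 0)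

theorem isotropicPlanes_sympForm : isotropicPlanes (sympForm n) = Lset n 2 := by
  simp only [isotropicPlanes, Lset, IsIsotropic, sympForm_apply]

theorem AvoidsMerminSquares.five_mul_ncard_le {V : Type*} [AddCommGroup V] [Module F2 V] [Finite V]
    {B : BilinForm F2 V} {D : Set (Submodule F2 V)} (hB : B.IsAlt) (hB' : B.Nondegenerate)
    (hDplanes : D ⊆ isotropicPlanes B) (hD : AvoidsMerminSquares B D) :
    5 * D.ncard ≤ 4 * (isotropicPlanes B).ncard := by
  classical
  have := Fintype.ofFinite V
  have hframes : 5 * #{t ∈ symplecticFrames B | framePlane t ∈ D} ≤ 4 * #(symplecticFrames B) :=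
    hD.five_mul_card_le (U := PV 2) (by simp) sympForm_isAlt sympForm_nondegenerate hB
  have hcountD := card_symplecticFrames_span_mem hB hB' hDplanes
  have hcount := card_symplecticFrames_span_mem hB hB' subset_rfl
  rw [filter_true_of_mem fun t ht => framePlane_mem_isotropicPlanes hB
    (mem_symplecticFrames.mp ht)] at hcount
  have hV : 0 < 3 * Fintype.card V ^ 2 := by positivity
  refine Nat.le_of_mul_le_mul_left ?_ hV
  linarith

end SymplecticForm

section Phase

/-- The nontrivial character `a ↦ (-1) ^ a` of `F2`. -/
noncomputable def signChar : AddChar F2 ℂ := AddChar.zmodChar 2 (by norm_num : (-1 : ℂ) ^ 2 = 1)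

theorem signChar_one : signChar 1 = -1 := by
  simp [signChar, AddChar.zmodChar_apply, ZMod.val_one]

theorem signChar_intCast (m : ℤ) : signChar m = (-1) ^ m := by
  rw [← signChar_one, ← AddChar.map_zsmul_eq_zpow, zsmul_one]

theorem signChar_injective : Function.Injective signChar := by
  intro a b h
  by_contra hab
  obtain rfl : a = b + 1 := by clear h; decide +revert
  rw [AddChar.map_add_eq_mul, signChar_one, mul_neg_one, neg_eq_self] at h
  exact (signChar.val_isUnit b).ne_zero h

variable {n : ℕ}

theorem intCast_dotZ_liftZ (u v : Fin n → F2) : (dotZ (liftZ u) (liftZ v) : F2) = u ⬝ᵥ v := by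
  simp [dotZ, liftZ, dotProduct]

/-- The factor `i^{x₁·x₂}` that makes `i^{x₁·x₂} X^{x₁} Z^{x₂}` a Hermitian Pauli operator. -/
noncomputable def pauliPhase (x : PV n) : ℂ := Complex.I ^ dotZ (liftZ x.1) (liftZ x.2)

theorem pauliPhase_ne_zero (x : PV n) : pauliPhase x ≠ 0 := zpow_ne_zero _ Complex.I_ne_zero

theorem pauliPhase_sq (x : PV n) : pauliPhase x ^ 2 = signChar (halfForm n x x) := by
  rw [pauliPhase, ← zpow_natCast, ← zpow_mul, mul_comm, zpow_mul, zpow_natCast, Complex.I_sq,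
    ← signChar_intCast, intCast_dotZ_liftZ, dotProduct_comm, halfForm_apply]

theorem phase_eq (x y : PV n) : phase x y =
    pauliPhase x * pauliPhase y * (pauliPhase (x + y))⁻¹ * signChar (halfForm n x y) := by
  rw [phase, zpow_neg, ← signChar_intCast, intCast_dotZ_liftZ]
  rfl

theorem phase_sq (x y : PV n) : phase x y ^ 2 = signChar (symp x y) := by
  have hexp : symp x y = halfForm n x x + halfForm n y y - halfForm n (x + y) (x + y) +
      2 • halfForm n x y := by
    rw [← sympForm_apply, sympForm_eq_halfForm_add, CharTwo.sub_eq_add]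
    simp only [map_add, LinearMap.add_apply]
    linear_combination -(halfForm n x y + halfForm n x x + halfForm n y y) *
      (CharTwo.two_eq_zero : (2 : F2) = 0)
  rw [phase_eq, hexp, AddChar.map_add_eq_mul, AddChar.map_sub_eq_div, AddChar.map_add_eq_mul,
    AddChar.map_nsmul_eq_pow, ← pauliPhase_sq, ← pauliPhase_sq, ← pauliPhase_sq]
  ring

theorem phase_eq_signChar_wght {x y : PV n} (h : symp x y = 0) :
    phase x y = signChar (wght x y) := by
  have hsq : phase x y ^ 2 = 1 := by rw [phase_sq, h, AddChar.map_zero_eq_one]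
  rcases sq_eq_one_iff.mp hsq with h | h
  · simp [wght, h]
  · simp [wght, h, signChar_one, (by norm_num : (-1 : ℂ) ≠ 1)]

theorem phase_mermin (x₁ x₂ y₁ y₂ : PV n) :
    phase x₁ x₂ * phase y₁ y₂ * phase (x₁ + x₂) (y₁ + y₂) =
      phase x₁ y₁ * phase x₂ y₂ * phase (x₁ + y₁) (x₂ + y₂) * signChar (symp x₂ y₁) := by
  have hexp : halfForm n x₁ x₂ + halfForm n y₁ y₂ + halfForm n (x₁ + x₂) (y₁ + y₂) =
      halfForm n x₁ y₁ + halfForm n x₂ y₂ + halfForm n (x₁ + y₁) (x₂ + y₂) + symp x₂ y₁ := by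
    rw [← sympForm_apply, sympForm_eq_halfForm_add]
    simp only [map_add, LinearMap.add_apply]
    linear_combination -CharTwo.add_self_eq_zero (halfForm n y₁ x₂)
  have hsign := congrArg signChar hexp
  simp only [AddChar.map_add_eq_mul] at hsign
  have h₁ := pauliPhase_ne_zero (x₁ + x₂)
  have h₂ := pauliPhase_ne_zero (y₁ + y₂)
  have h₃ := pauliPhase_ne_zero (x₁ + y₁)
  have h₄ := pauliPhase_ne_zero (x₂ + y₂)
  simp only [phase_eq, add_add_add_comm x₁ x₂]
  field_simp
  linear_combination pauliPhase x₁ * pauliPhase x₂ * pauliPhase y₁ * pauliPhase y₂ *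
    (pauliPhase (x₁ + y₁ + (x₂ + y₂)))⁻¹ * hsign

theorem wght_mermin {x₁ x₂ y₁ y₂ : PV n} (hx : symp x₁ x₂ = 0) (hy : symp y₁ y₂ = 0)
    (hxy : symp (x₁ + x₂) (y₁ + y₂) = 0) (h₁ : symp x₁ y₁ = 0) (h₂ : symp x₂ y₂ = 0)
    (h₁₂ : symp (x₁ + y₁) (x₂ + y₂) = 0) :
    wght x₁ x₂ + wght y₁ y₂ + wght (x₁ + x₂) (y₁ + y₂) =
      wght x₁ y₁ + wght x₂ y₂ + wght (x₁ + y₁) (x₂ + y₂) + symp x₂ y₁ := by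
  apply signChar_injective
  simpa only [AddChar.map_add_eq_mul, phase_eq_signChar_wght, hx, hy, hxy, h₁, h₂, h₁₂] using
    phase_mermin x₁ x₂ y₁ y₂

end Phase

section Outcomes

variable {n : ℕ} {D : Set (Submodule F2 (PV n))}

/-- `s` restricts to an outcome of every member of `D`. -/
def IsGlobalOutcome (D : Set (Submodule F2 (PV n))) (s : PV n → F2) : Prop :=
  ∀ S ∈ D, IsOutcome S fun v => s v

theorem exists_isGlobalOutcome {f : (S : Submodule F2 (PV n)) → S → F2}
    (hf : ∀ S ∈ D, IsOutcome S (f S))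
    (hcons : ∀ S₁ ∈ D, ∀ S₂ ∈ D, ConsistentOn (f S₁) (f S₂)) : ∃ s, IsGlobalOutcome D s := by
  classical
  let s (v : PV n) : F2 := if h : ∃ S ∈ D, v ∈ S then f h.choose ⟨v, h.choose_spec.2⟩ else 0
  have hs : ∀ S ∈ D, f S = fun v : S => s v := by
    intro S hS
    ext v
    have h : ∃ S ∈ D, (v : PV n) ∈ S := ⟨S, hS, v.2⟩
    simpa only [s, dif_pos h] using hcons S hS _ h.choose_spec.1 v v.2 h.choose_spec.2
  exact ⟨s, fun S hS => hs S hS ▸ hf S hS⟩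

theorem IsGlobalOutcome.apply_add {s : PV n → F2} (hs : IsGlobalOutcome D s)
    {x y : PV n} (hxy : Submodule.span F2 {x, y} ∈ D) : s (x + y) = s x + s y + wght x y :=
  hs _ hxy ⟨x, Submodule.subset_span (by simp)⟩ ⟨y, Submodule.subset_span (by simp)⟩

theorem symp_eq_zero_of_span_mem (hD : D ⊆ Lset n 2) {x y : PV n}
    (hxy : Submodule.span F2 {x, y} ∈ D) : symp x y = 0 :=
  (hD hxy).1 x (Submodule.subset_span (by simp)) y (Submodule.subset_span (by simp))

/- Summing `s` over the nine points of the square along the rows and along the columns gives two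
expressions that differ by `symp x₂ y₁`. -/
theorem IsGlobalOutcome.symp_eq_zero {s : PV n → F2} (hs : IsGlobalOutcome D s)
    (hD : D ⊆ Lset n 2) {x₁ x₂ y₁ y₂ : PV n} (hx : Submodule.span F2 {x₁, x₂} ∈ D)
    (hy : Submodule.span F2 {y₁, y₂} ∈ D) (hxy : Submodule.span F2 {x₁ + x₂, y₁ + y₂} ∈ D)
    (h₁ : Submodule.span F2 {x₁, y₁} ∈ D) (h₂ : Submodule.span F2 {x₂, y₂} ∈ D)
    (h₁₂ : Submodule.span F2 {x₁ + y₁, x₂ + y₂} ∈ D) : symp x₂ y₁ = 0 := by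
  have hwght := wght_mermin (symp_eq_zero_of_span_mem hD hx) (symp_eq_zero_of_span_mem hD hy)
    (symp_eq_zero_of_span_mem hD hxy) (symp_eq_zero_of_span_mem hD h₁)
    (symp_eq_zero_of_span_mem hD h₂) (symp_eq_zero_of_span_mem hD h₁₂)
  have hrows := hs.apply_add hxy
  have hcols := hs.apply_add h₁₂
  rw [hs.apply_add hx, hs.apply_add hy] at hrows
  rw [add_add_add_comm x₁, hs.apply_add h₁, hs.apply_add h₂] at hcols
  linear_combination hcols - hrows - hwght

theorem IsGlobalOutcome.avoidsMerminSquares {s : PV n → F2} (hs : IsGlobalOutcome D s)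
    (hD : D ⊆ Lset n 2) : AvoidsMerminSquares (sympForm n) D := by
  rintro ⟨⟨e₁, e₂⟩, f₁, f₂⟩ ht
  by_contra! hlines
  have hsymp : symp e₂ f₂ = 0 :=
    hs.symp_eq_zero hD (hlines 0) (hlines 1) (hlines 5) (hlines 3) (hlines 4) (hlines 2)
  exact zero_ne_one (hsymp.symm.trans ((sympForm_apply e₂ f₂).symm.trans ht.e₂_f₂))

end Outcomes

/-- **`Pval(↓L^n_2) ≤ 4/5`.** For every `n ≥ 2`, any subset `D` of the 2-dimensional
isotropic subspaces of `F2^{2n}` admitting a pairwise consistent family of outcomes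
satisfies `|D| ≤ (4/5)·|L^n_2|`. -/
theorem pval_L_n_2_le :
    ∀ n : ℕ, 2 ≤ n →
      ∀ D ⊆ Lset n 2,
        (∃ f : (S : Submodule F2 (PV n)) → (S → F2),
            (∀ S ∈ D, IsOutcome S (f S)) ∧
            (∀ S₁ ∈ D, ∀ S₂ ∈ D, ConsistentOn (f S₁) (f S₂))) →
        (Nat.card D : ℝ) ≤ (4 / 5) * (Nat.card (Lset n 2) : ℝ) := by
  rintro n - D hD ⟨f, hf, hcons⟩
  obtain ⟨s, hs⟩ := exists_isGlobalOutcome hf hcons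
  have hmermin : AvoidsMerminSquares (sympForm n) D := hs.avoidsMerminSquares hD
  rw [← isotropicPlanes_sympForm] at hD ⊢
  have hcard : 5 * D.ncard ≤ 4 * (isotropicPlanes (sympForm n)).ncard :=
    hmermin.five_mul_ncard_le sympForm_isAlt sympForm_nondegenerate hD
  rw [Nat.card_coe_set_eq, Nat.card_coe_set_eq]
  have : (5 : ℝ) * D.ncard ≤ 4 * (isotropicPlanes (sympForm n)).ncard := mod_cast hcard
  linarith
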